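/- There is an absolute constant C with the following property. For every R > 0 and every u smooth on a neighborhood of the closed annulus A = { x ∈ ℝ³ : R ≤ |x| ≤ 2R }, let c = |A|^{−1} ∫_A |y| u(y) dy (the average of |y|u(y) over A). Then ‖ ∇( u − c|x|^{−1} ) ‖_{L²(A)} + R^{−1} ‖ u − c|x|^{−1} ‖_{L²(A)} ≤ C ‖ |x|^{−1} ∇( |x| u ) ‖_{L²(A)}, where ∇(|x|u) denotes the gradient of the function x ↦ |x|u(x). -/

import Mathlib

/-!
The substitution `w = |x| u` turns the claim into the Poincaré inequality
`‖w - c‖_{L²(A)} ≤ C R ‖∇w‖_{L²(A)}` on the annulus, where `c` is the mean of `w`: indeed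
`u - c / |x| = |x|⁻¹ (w - c)`, so the remainder and its gradient are bounded pointwise by
`|x|⁻¹ |w - c|` and `|x|⁻¹ |∇w| + |x|⁻² |w - c|` (`norm_pd_remainder_sq_le`), and `|x|` is comparable
to `R` on the annulus.

The Poincaré inequality (`annulus_poincare`) is proved in the form of a bound for the double integral
of `|w(x) - w(y)|²`. In polar coordinates the points `r ω` and `s η` are joined through `r η`. The
radial step is one-dimensional (`radial_path`). The spherical step is the Poincaré inequality on a
sphere (`sphere_poincare`), proved as follows. Integrals over pairs of directions are replaced by
integrals over the unit ball of `ℝ³ × ℝ³ = ℝ⁶` of `0`-homogeneous functions. For almost every `(x, y)`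
the path `z(θ) = cos θ x + sin θ y`, `0 ≤ θ ≤ π / 2`, avoids the origin, and its projection to the
sphere joins the directions of `x` and `y`. The speed of the projection is at most
`2 |z'(θ)| / |z(θ)|`. The map `(x, y) ↦ (z(θ), z'(θ))` is a rotation of `ℝ⁶`, so it preserves the
ball and Lebesgue measure, and the integral over `θ` becomes a multiple of the integral of
`|y|² |x|⁻² |∇w|²(x / |x|)` over the ball, which is finite because `|x|⁻²` is integrable in `ℝ³`.

The estimates are carried out with `∫⁻`, where no integrability has to be tracked, and converted to
real integrals at the end (`annulus_poincare_real`).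
-/

open MeasureTheory

noncomputable section

/-- Euclidean space `ℝ³`. -/
abbrev E3 := EuclideanSpace ℝ (Fin 3)

/-- The partial derivative `∂ⱼ u` of a complex-valued function on `ℝ³`. -/
def pd (j : Fin 3) (u : E3 → ℂ) : E3 → ℂ :=
  fun x => fderiv ℝ u x (EuclideanSpace.single j 1)

/-- The closed dyadic annulus `A = { R ≤ |x| ≤ 2R }` in `ℝ³`. -/
def annulus (R : ℝ) : Set E3 := {x | R ≤ ‖x‖ ∧ ‖x‖ ≤ 2 * R}

section

open Set Metric ENNReal Real

/-! ### Cauchy–Schwarz along paths and polar coordinates -/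

/-- Cauchy–Schwarz against the constant function `1`. -/
lemma sq_lintegral_le {α : Type*} [MeasurableSpace α] (μ : Measure α) {f : α → ℝ≥0∞}
    (hf : AEMeasurable f μ) : (∫⁻ x, f x ∂μ) ^ 2 ≤ μ univ * ∫⁻ x, f x ^ 2 ∂μ := by
  have h := ENNReal.lintegral_mul_le_Lp_mul_Lq μ (p := 2) (q := 2)
    Real.HolderConjugate.two_two (f := fun _ => 1) aemeasurable_const hf
  simp only [Pi.mul_apply, one_mul, ENNReal.one_rpow, lintegral_const] at h
  calc (∫⁻ x, f x ∂μ) ^ 2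
      ≤ (μ univ ^ (1 / 2 : ℝ) * (∫⁻ x, f x ^ (2 : ℝ) ∂μ) ^ (1 / 2 : ℝ)) ^ 2 := by gcongr
    _ = _ := by
      rw [mul_pow, ← ENNReal.rpow_natCast, ← ENNReal.rpow_mul, ← ENNReal.rpow_natCast,
        ← ENNReal.rpow_mul]
      norm_num

/-- The increment of `w` along a `C¹` path is controlled by the `L²` norm of the derivative along
the path: fundamental theorem of calculus and Cauchy–Schwarz. -/
lemma path_ineq {w : E3 → ℂ} {γ γ' : ℝ → E3} {a b : ℝ} (hab : a ≤ b)
    (hγ : ∀ t ∈ Icc a b, HasDerivAt γ (γ' t) t) (hγ' : ContinuousOn γ' (Icc a b))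
    (hw : ∀ t ∈ Icc a b, ContDiffAt ℝ 1 w (γ t)) :
    ‖w (γ b) - w (γ a)‖ₑ ^ 2 ≤
      ENNReal.ofReal (b - a) * ∫⁻ t in Icc a b, ‖fderiv ℝ w (γ t) (γ' t)‖ₑ ^ 2 := by
  have hd : ∀ t ∈ Icc a b, HasDerivAt (w ∘ γ) (fderiv ℝ w (γ t) (γ' t)) t := fun t ht =>
    ((hw t ht).differentiableAt (by simp)).hasFDerivAt.comp_hasDerivAt t (hγ t ht)
  have hc : ContinuousOn (fun t => fderiv ℝ w (γ t) (γ' t)) (Icc a b) := by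
    refine ContinuousOn.clm_apply (fun t ht => ?_) hγ'
    have h1 : ContinuousAt (fderiv ℝ w) (γ t) := (hw t ht).continuousAt_fderiv (by simp)
    exact (ContinuousAt.comp (f := γ) h1 (hγ t ht).continuousAt).continuousWithinAt
  have hI : IntervalIntegrable (fun t => fderiv ℝ w (γ t) (γ' t)) volume a b :=
    ContinuousOn.intervalIntegrable_of_Icc hab hc
  have h := intervalIntegral.integral_eq_sub_of_hasDerivAt
    (fun t ht => hd t (by rwa [uIcc_of_le hab] at ht)) hI
  simp only [Function.comp] at h
  rw [← h, intervalIntegral.integral_of_le hab, ← integral_Icc_eq_integral_Ioc]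
  calc _ ≤ (∫⁻ t in Icc a b, ‖fderiv ℝ w (γ t) (γ' t)‖ₑ) ^ 2 := by
        gcongr; exact enorm_integral_le_lintegral_enorm _
    _ ≤ _ := by
        refine (sq_lintegral_le _ (hc.aestronglyMeasurable measurableSet_Icc).enorm).trans ?_
        simp

/-- Polar coordinates in `ℝ³`, with the `r`-integral inside. -/
lemma lintegral_polar {F : E3 → ℝ≥0∞} (hF : Measurable F) :
    ∫⁻ x, F x = ∫⁻ ω, (∫⁻ r in Ioi (0 : ℝ), ENNReal.ofReal (r ^ 2) * F (r • (ω : E3)))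
      ∂(volume : Measure E3).toSphere := by
  have h := (volume : Measure E3).measurePreserving_homeomorphUnitSphereProd.symm
    (e := (homeomorphUnitSphereProd E3).toMeasurableEquiv)
  have h2 := h.lintegral_comp (f := fun x => F x) (by fun_prop)
  have h3 : ∫⁻ x, F x = ∫⁻ x in ({0}ᶜ : Set E3), F x := by rw [restrict_compl_singleton]
  rw [h3, ← lintegral_subtype_comap (measurableSet_singleton _).compl, ← h2]
  rw [lintegral_prod _ (by
    exact ((hF.comp measurable_subtype_coe).comp (MeasurableEquiv.measurable _)).aemeasurable)]
  refine lintegral_congr fun ω => ?_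
  have e : Module.finrank ℝ E3 - 1 = 2 := by simp
  rw [e, Measure.volumeIoiPow, lintegral_withDensity_eq_lintegral_mul _ (by fun_prop)
    (by
      exact ((hF.comp measurable_subtype_coe).comp (MeasurableEquiv.measurable _)).comp
        measurable_prodMk_left)]
  rw [← lintegral_subtype_comap measurableSet_Ioi]
  rfl

/-! ### The rotations mixing the two factors of `ℝ³ × ℝ³` -/

lemma norm_sq_rotation (θ : ℝ) (x y : E3) :
    ‖cos θ • x + sin θ • y‖ ^ 2 + ‖-sin θ • x + cos θ • y‖ ^ 2 = ‖x‖ ^ 2 + ‖y‖ ^ 2 := by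
  simp only [norm_add_sq_real, norm_smul, real_inner_smul_left, real_inner_smul_right, mul_pow,
    Real.norm_eq_abs, sq_abs, neg_sq]
  linear_combination (‖x‖^2 + ‖y‖^2) * sin_sq_add_cos_sq θ

/-- The rotation by the angle `θ` in the plane spanned by the two factors of `ℝ³ × ℝ³`. -/
def rot (θ : ℝ) (p : E3 × E3) : E3 × E3 :=
  (cos θ • p.1 + sin θ • p.2, -sin θ • p.1 + cos θ • p.2)

lemma measurable_rot : Measurable fun q : (E3 × E3) × ℝ => rot q.2 q.1 := by
  unfold rot; fun_prop

/-- Rotations preserve Lebesgue measure on `ℝ³ × ℝ³`. The product carries the sup norm, so the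
isometry is built on `WithLp 2 (E3 × E3)` and transported by the volume-preserving identity. -/
lemma lintegral_rotation (θ : ℝ) {F : E3 × E3 → ℝ≥0∞} (hF : Measurable F) :
    ∫⁻ p : E3 × E3, F (rot θ p) = ∫⁻ p, F p := by
  let L : WithLp 2 (E3 × E3) →ₗ[ℝ] WithLp 2 (E3 × E3) :=
    { toFun := fun p => WithLp.toLp 2 (cos θ • p.fst + sin θ • p.snd,
        -sin θ • p.fst + cos θ • p.snd)
      map_add' := fun p q => by
        apply (WithLp.ofLp_injective 2)
        ext <;> simp <;> ring
      map_smul' := fun c p => by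
        apply (WithLp.ofLp_injective 2)
        ext <;> simp <;> ring }
  have hL : ∀ p, ‖L p‖ = ‖p‖ := fun p => by
    rw [← sq_eq_sq₀ (norm_nonneg _) (norm_nonneg _), WithLp.prod_norm_sq_eq_of_L2,
      WithLp.prod_norm_sq_eq_of_L2]
    exact norm_sq_rotation θ _ _
  let Le := (LinearIsometry.mk L hL).toLinearIsometryEquiv rfl
  have h := ((WithLp.volume_preserving_ofLp E3 E3).comp Le.measurePreserving).comp
    (WithLp.volume_preserving_toLp E3 E3)
  exact h.lintegral_comp hF

/-- Functions of the form `k(|x|) F(x / |x|)` have integrals that factor in polar coordinates. -/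
lemma lintegral_polar_mul {k : ℝ → ℝ≥0∞} (hk : Measurable k) {F : E3 → ℝ≥0∞} (hF : Measurable F) :
    ∫⁻ x : E3, k ‖x‖ * F (‖x‖⁻¹ • x) =
      (∫⁻ r in Ioi (0 : ℝ), ENNReal.ofReal (r ^ 2) * k r) *
        ∫⁻ ω, F (ω : E3) ∂(volume : Measure E3).toSphere := by
  rw [lintegral_polar (by fun_prop), ← lintegral_const_mul _ (by fun_prop)]
  refine lintegral_congr fun ω => ?_
  rw [← lintegral_mul_const _ (by fun_prop)]
  refine setLIntegral_congr_fun measurableSet_Ioi fun r (hr : 0 < r) => ?_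
  have hω : ‖(ω : E3)‖ = 1 := by simp
  simp only [norm_smul, hω, mul_one, Real.norm_eq_abs, abs_of_pos hr, smul_smul,
    inv_mul_cancel₀ hr.ne', one_smul, mul_assoc]

/-- The projection `ρ z / |z|` of a moving point `z ≠ 0` to the sphere of radius `ρ` has speed at
most `2 ρ |z'| / |z|`. (The optimal constant is `1`, but the factor `2` is harmless.) -/
lemma exists_deriv_proj {z z' : ℝ → E3} {s : Set ℝ} (hz : ∀ t ∈ s, HasDerivAt z (z' t) t)
    (hz' : ContinuousOn z' s) (h0 : ∀ t ∈ s, z t ≠ 0) {ρ : ℝ} (hρ : 0 < ρ) :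
    ∃ v : ℝ → E3, (∀ t ∈ s, HasDerivAt (fun t => ρ • ‖z t‖⁻¹ • z t) (v t) t) ∧
      ContinuousOn v s ∧ ∀ t ∈ s, ‖v t‖ ≤ 2 * ρ * ‖z' t‖ * ‖z t‖⁻¹ := by
  have hn : ∀ t ∈ s, HasDerivAt (fun t => ‖z t‖) (inner ℝ (z t) (z' t) / ‖z t‖) t := by
    intro t ht
    have h := ((hz t ht).norm_sq).sqrt (by simpa using h0 t ht)
    simp only [Real.sqrt_sq (norm_nonneg _)] at h
    convert h using 1
    ring
  have hzc : ContinuousOn z s := fun t ht => (hz t ht).continuousAt.continuousWithinAt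
  refine ⟨fun t => ρ • (‖z t‖⁻¹ • z' t + (-(inner ℝ (z t) (z' t) / ‖z t‖) / ‖z t‖ ^ 2) • z t),
    fun t ht => ?_, ?_, fun t ht => ?_⟩
  · exact (((hn t ht).inv (norm_ne_zero_iff.2 (h0 t ht))).smul (hz t ht)).const_smul ρ
  · have h1 : ∀ t ∈ s, ‖z t‖ ≠ 0 := fun t ht => norm_ne_zero_iff.2 (h0 t ht)
    have h2 : ∀ t ∈ s, ‖z t‖ ^ 2 ≠ 0 := fun t ht => pow_ne_zero 2 (h1 t ht)
    fun_prop (disch := assumption)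
  · have hp : 0 < ‖z t‖ := norm_pos_iff.2 (h0 t ht)
    have hi := abs_real_inner_le_norm (z t) (z' t)
    rw [norm_smul, Real.norm_eq_abs, abs_of_pos hρ]
    have h1 : ‖‖z t‖⁻¹ • z' t‖ = ‖z' t‖ * ‖z t‖⁻¹ := by
      rw [norm_smul, norm_inv, norm_norm, mul_comm]
    have h2 : ‖(-(inner ℝ (z t) (z' t) / ‖z t‖) / ‖z t‖ ^ 2) • z t‖ ≤ ‖z' t‖ * ‖z t‖⁻¹ := by
      rw [norm_smul, Real.norm_eq_abs, abs_div, abs_neg, abs_div, abs_norm,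
        abs_of_pos (by positivity : 0 < ‖z t‖ ^ 2)]
      calc _ ≤ (‖z t‖ * ‖z' t‖) / ‖z t‖ / ‖z t‖ ^ 2 * ‖z t‖ := by gcongr
        _ = _ := by field_simp
    have := norm_add_le (‖z t‖⁻¹ • z' t)
      ((-(inner ℝ (z t) (z' t) / ‖z t‖) / ‖z t‖ ^ 2) • z t)
    calc _ ≤ ρ * (‖z' t‖ * ‖z t‖⁻¹ + ‖z' t‖ * ‖z t‖⁻¹) := by gcongr; linarith
      _ = _ := by ring

/-- The function `(x, y) ↦ 4 ρ² |y|² |x|⁻² g(ρ x / |x|)`. At the point `rot θ (x, y)` it bounds the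
squared derivative of `w` along the projected path `θ ↦ ρ z / |z|`, `z = cos θ x + sin θ y`, since
the second component of `rot θ (x, y)` is the velocity of the first. -/
def rotKernel (ρ : ℝ) (g : E3 → ℝ≥0∞) (p : E3 × E3) : ℝ≥0∞ :=
  ENNReal.ofReal (4 * ρ ^ 2) * (ENNReal.ofReal (‖p.2‖ ^ 2) * ENNReal.ofReal ((‖p.1‖ ^ 2)⁻¹)) *
    g (ρ • ‖p.1‖⁻¹ • p.1)

lemma measurable_rotKernel (ρ : ℝ) {g : E3 → ℝ≥0∞} (hg : Measurable g) :
    Measurable (rotKernel ρ g) := by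
  unfold rotKernel; fun_prop

/-- The values of `w` at the projections of `x` and `y` to the sphere of radius `ρ` are compared
along the projection of `cos θ x + sin θ y`, which joins them and avoids the origin when `x` and
`y` are linearly independent. -/
lemma rotation_path {w : E3 → ℂ} {g : E3 → ℝ≥0∞} {ρ : ℝ} (hρ : 0 < ρ)
    (hw : ∀ x, ‖x‖ = ρ → ContDiffAt ℝ 1 w x)
    (hg : ∀ x, ‖x‖ = ρ → ∀ v, ‖fderiv ℝ w x v‖ₑ ^ 2 ≤ ‖v‖ₑ ^ 2 * g x)
    {x y : E3} (hx : x ≠ 0) (hy : y ∉ Submodule.span ℝ {x}) :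
    ‖w (ρ • ‖x‖⁻¹ • x) - w (ρ • ‖y‖⁻¹ • y)‖ₑ ^ 2 ≤ ENNReal.ofReal (π / 2) *
      ∫⁻ θ in Icc 0 (π / 2),
        rotKernel ρ g (rot θ (x, y)) := by
  have hz : ∀ t ∈ Icc 0 (π / 2), HasDerivAt (fun θ => cos θ • x + sin θ • y)
      (-sin t • x + cos t • y) t := fun t _ =>
    ((hasDerivAt_cos t).smul_const x).add ((hasDerivAt_sin t).smul_const y)
  have h0 : ∀ t ∈ Icc 0 (π / 2), cos t • x + sin t • y ≠ 0 := by
    intro t _ h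
    by_cases hs : sin t = 0
    · have hc : cos t ≠ 0 := fun hc => by have := sin_sq_add_cos_sq t; simp [hs, hc] at this
      simp [hs, hc, hx] at h
    · refine hy (Submodule.mem_span_singleton.2 ⟨-(cos t / sin t), ?_⟩)
      have h' : sin t • y = -cos t • x := by
        rw [neg_smul, eq_neg_iff_add_eq_zero, add_comm]; exact h
      calc _ = (sin t)⁻¹ • (-cos t • x) := by rw [smul_smul]; congr 1; ring
        _ = y := by rw [← h', smul_smul, inv_mul_cancel₀ hs, one_smul]
  obtain ⟨v, hv, hvc, hvb⟩ := exists_deriv_proj hz (by fun_prop) h0 hρ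
  have hnorm : ∀ z : E3, z ≠ 0 → ‖ρ • ‖z‖⁻¹ • z‖ = ρ := fun z hz => by
    rw [norm_smul, norm_smul, norm_inv, norm_norm, inv_mul_cancel₀ (norm_ne_zero_iff.2 hz),
      mul_one, Real.norm_eq_abs, abs_of_pos hρ]
  have h := path_ineq (w := w) (by positivity : (0 : ℝ) ≤ π / 2) hv hvc
    fun t ht => hw _ (hnorm _ (h0 t ht))
  simp only [cos_zero, sin_zero, cos_pi_div_two, sin_pi_div_two, one_smul, zero_smul, add_zero,
    zero_add, sub_zero] at h
  rw [← enorm_neg, neg_sub]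
  refine h.trans ?_
  refine mul_le_mul_right ?_ _
  refine setLIntegral_mono' measurableSet_Icc fun t ht => ?_
  refine (hg _ (hnorm _ (h0 t ht)) _).trans ?_
  unfold rotKernel rot
  refine mul_le_mul_left ?_ _
  rw [← ENNReal.ofReal_mul (by positivity), ← ENNReal.ofReal_mul (by positivity),
    ← ofReal_norm, ← ENNReal.ofReal_pow (norm_nonneg _)]
  refine ENNReal.ofReal_le_ofReal ?_
  calc ‖v t‖ ^ 2 ≤ _ := pow_le_pow_left₀ (norm_nonneg _) (hvb t ht) 2
    _ = _ := by rw [← inv_pow]; ring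

/-! ### Poincaré inequality on spheres -/

/-- The indicator function of the unit ball of `ℝ³ × ℝ³ = ℝ⁶`. -/
def chi : E3 × E3 → ℝ≥0∞ := {p | ‖p.1‖ ^ 2 + ‖p.2‖ ^ 2 ≤ 1}.indicator 1

lemma measurable_chi : Measurable chi :=
  measurable_one.indicator (measurableSet_le (by fun_prop) measurable_const)

lemma chi_rot (θ : ℝ) (p : E3 × E3) : chi (rot θ p) = chi p := by
  have h : rot θ p ∈ {p : E3 × E3 | ‖p.1‖ ^ 2 + ‖p.2‖ ^ 2 ≤ 1} ↔
      p ∈ {p : E3 × E3 | ‖p.1‖ ^ 2 + ‖p.2‖ ^ 2 ≤ 1} := by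
    show ‖cos θ • p.1 + sin θ • p.2‖ ^ 2 + ‖-sin θ • p.1 + cos θ • p.2‖ ^ 2 ≤ 1 ↔ _
    rw [norm_sq_rotation]; rfl
  by_cases hp : p ∈ {p : E3 × E3 | ‖p.1‖ ^ 2 + ‖p.2‖ ^ 2 ≤ 1}
  · simp only [chi, indicator_of_mem hp, indicator_of_mem (h.2 hp), Pi.one_apply]
  · simp only [chi, indicator_of_notMem hp, indicator_of_notMem (mt h.1 hp)]

/-- A double integral over the unit sphere is bounded by the integral of its `0`-homogeneous
extension over the unit ball of `ℝ⁶`: that ball contains the product of the shells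
`1/4 ≤ |x| ≤ 1/2` and `1/4 ≤ |y| ≤ 1/2`, each of radial mass at least `1/64`. -/
lemma sphere_le_chi {D : E3 → E3 → ℝ≥0∞} (hD : Measurable fun p : E3 × E3 => D p.1 p.2) :
    ∫⁻ ω, (∫⁻ η, D (ω : E3) (η : E3) ∂(volume : Measure E3).toSphere)
      ∂(volume : Measure E3).toSphere ≤
    64 ^ 2 * ∫⁻ x : E3, ∫⁻ y : E3, chi (x, y) * D (‖x‖⁻¹ • x) (‖y‖⁻¹ • y) := by
  set σ := (volume : Measure E3).toSphere
  set k : ℝ → ℝ≥0∞ := (Icc (1 / 4) (1 / 2)).indicator 1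
  have hk : Measurable k := measurable_one.indicator measurableSet_Icc
  set κ := ∫⁻ r in Ioi (0 : ℝ), ENNReal.ofReal (r ^ 2) * k r
  have hκ : 64⁻¹ ≤ κ := by
    calc (64⁻¹ : ℝ≥0∞) = ∫⁻ r in Icc (1 / 4 : ℝ) (1 / 2), ENNReal.ofReal (1 / 16) := by
          rw [setLIntegral_const, Real.volume_Icc, ← ENNReal.ofReal_mul (by norm_num)]
          norm_num
          rw [one_div, ENNReal.ofReal_inv_of_pos (by norm_num)]; norm_num
      _ ≤ ∫⁻ r in Icc (1 / 4 : ℝ) (1 / 2), ENNReal.ofReal (r ^ 2) * k r := by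
          refine setLIntegral_mono' measurableSet_Icc fun r hr => ?_
          simp only [k, indicator_of_mem hr, Pi.one_apply, mul_one]
          exact ENNReal.ofReal_le_ofReal (by nlinarith [hr.1])
      _ ≤ κ := lintegral_mono_set fun r hr => by
          have := hr.1; simp only [mem_Ioi]; linarith
  have hχ := measurable_chi
  have lower : κ * (κ * ∫⁻ ω, (∫⁻ η, D (ω : E3) (η : E3) ∂σ) ∂σ) ≤
      ∫⁻ x : E3, ∫⁻ y : E3, chi (x, y) * D (‖x‖⁻¹ • x) (‖y‖⁻¹ • y) := by
    have e1 : ∀ x : E3, ∫⁻ y : E3, k ‖y‖ * D x (‖y‖⁻¹ • y) = κ * ∫⁻ η, D x (η : E3) ∂σ :=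
      fun x => lintegral_polar_mul (F := D x) hk (by fun_prop)
    have hm : Measurable fun x : E3 => ∫⁻ η, D x (η : E3) ∂σ :=
      Measurable.lintegral_prod_right' (f := fun p : E3 × sphere (0 : E3) 1 => D p.1 p.2)
        (by fun_prop)
    have e2 := lintegral_polar_mul (k := k) (F := fun x => κ * ∫⁻ η, D x (η : E3) ∂σ) hk
      (by fun_prop)
    rw [lintegral_const_mul _ (by fun_prop)] at e2
    rw [← e2]
    simp_rw [← e1]
    refine lintegral_mono fun x => ?_
    rw [← lintegral_const_mul _ (by fun_prop)]
    refine lintegral_mono fun y => ?_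
    rw [← mul_assoc]
    gcongr
    by_cases hx : ‖x‖ ∈ Icc (1 / 4 : ℝ) (1 / 2)
    · by_cases hy : ‖y‖ ∈ Icc (1 / 4 : ℝ) (1 / 2)
      · have : (x, y) ∈ {p : E3 × E3 | ‖p.1‖ ^ 2 + ‖p.2‖ ^ 2 ≤ 1} := by
          show ‖x‖ ^ 2 + ‖y‖ ^ 2 ≤ 1
          nlinarith [hx.1, hx.2, hy.1, hy.2]
        simp only [k, chi, indicator_of_mem hx, indicator_of_mem hy, indicator_of_mem this,
          Pi.one_apply, mul_one, le_refl]
      · simp only [k, indicator_of_notMem hy, mul_zero, zero_le]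
    · simp only [k, indicator_of_notMem hx, zero_mul, zero_le]
  have h64 : (64 : ℝ≥0∞) * 64⁻¹ = 1 := ENNReal.mul_inv_cancel (by simp) (by simp)
  calc _ = ((64 : ℝ≥0∞) * 64⁻¹) ^ 2 * ∫⁻ ω, (∫⁻ η, D (ω : E3) (η : E3) ∂σ) ∂σ := by
        rw [h64, one_pow, one_mul]
    _ = 64 ^ 2 * (64⁻¹ * (64⁻¹ * ∫⁻ ω, (∫⁻ η, D (ω : E3) (η : E3) ∂σ) ∂σ)) := by ring
    _ ≤ 64 ^ 2 * (κ * (κ * ∫⁻ ω, (∫⁻ η, D (ω : E3) (η : E3) ∂σ) ∂σ)) := by gcongr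
    _ ≤ _ := by gcongr

/-- By rotation invariance of Lebesgue measure and of the ball, averaging over `θ` costs nothing. -/
lemma lintegral_chi_rot {Q : E3 × E3 → ℝ≥0∞} (hQ : Measurable Q) (c : ℝ≥0∞) :
    ∫⁻ x : E3, ∫⁻ y : E3, chi (x, y) * (c * ∫⁻ θ in Icc 0 (π / 2), Q (rot θ (x, y))) =
      c * ENNReal.ofReal (π / 2) * ∫⁻ p, chi p * Q p := by
  have hχ := measurable_chi
  have hF : Measurable fun q : (E3 × E3) × ℝ => chi q.1 * Q (rot q.2 q.1) :=
    (hχ.comp measurable_fst).mul (hQ.comp measurable_rot)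
  have hI : Measurable fun p : E3 × E3 => ∫⁻ θ in Icc 0 (π / 2), Q (rot θ p) :=
    Measurable.lintegral_prod_right' (hQ.comp measurable_rot)
  have hr : ∀ θ, ∫⁻ p, chi p * Q (rot θ p) = ∫⁻ p, chi p * Q p := fun θ => by
    rw [← lintegral_rotation θ (F := fun p => chi p * Q p) (hχ.mul hQ)]
    refine lintegral_congr fun p => ?_
    rw [chi_rot]
  calc _ = ∫⁻ p, chi p * (c * ∫⁻ θ in Icc 0 (π / 2), Q (rot θ p)) := by
        rw [Measure.volume_eq_prod, lintegral_prod]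
        exact (hχ.mul (hI.const_mul c)).aemeasurable
    _ = ∫⁻ p, c * ∫⁻ θ in Icc 0 (π / 2), chi p * Q (rot θ p) := by
        refine lintegral_congr fun p => ?_
        have hm' : Measurable fun θ => rot θ p := by unfold rot; fun_prop
        have hm : Measurable fun θ => Q (rot θ p) := hQ.comp hm'
        rw [lintegral_const_mul _ hm]
        ring
    _ = c * ∫⁻ p, ∫⁻ θ in Icc 0 (π / 2), chi p * Q (rot θ p) :=
        lintegral_const_mul _ (Measurable.lintegral_prod_right' hF)
    _ = c * ∫⁻ θ in Icc 0 (π / 2), ∫⁻ p, chi p * Q (rot θ p) := by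
        rw [lintegral_lintegral_swap hF.aemeasurable]
    _ = _ := by
        simp_rw [hr]
        rw [setLIntegral_const, Real.volume_Icc, sub_zero]; ring

/-- The singular weight `|x|⁻²` of `rotKernel` is absorbed by the Jacobian `r²` of polar
coordinates. -/
lemma lintegral_chi_rotKernel (ρ : ℝ) {g : E3 → ℝ≥0∞} (hgm : Measurable g) :
    ∫⁻ p, chi p * rotKernel ρ g p ≤
      4 * ENNReal.ofReal (ρ ^ 2) * volume (closedBall (0 : E3) 1) *
        ∫⁻ ω, g (ρ • (ω : E3)) ∂(volume : Measure E3).toSphere := by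
  set σ := (volume : Measure E3).toSphere
  set V : ℝ≥0∞ := volume (closedBall (0 : E3) 1)
  set k₂ : ℝ → ℝ≥0∞ := (Iic 1).indicator fun r => ENNReal.ofReal ((r ^ 2)⁻¹)
  have hk₂ : Measurable k₂ := Measurable.indicator (by fun_prop) measurableSet_Iic
  set G : E3 → ℝ≥0∞ := fun x => g (ρ • x)
  have hG : Measurable G := by fun_prop
  have h1 : ∫⁻ x : E3, k₂ ‖x‖ * G (‖x‖⁻¹ • x) ≤ ∫⁻ ω, G (ω : E3) ∂σ := by
    rw [lintegral_polar_mul hk₂ hG]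
    refine mul_le_of_le_one_left' ?_
    calc _ ≤ ∫⁻ r in Ioi (0 : ℝ), (Iic 1).indicator 1 r := by
          refine setLIntegral_mono' measurableSet_Ioi fun r (hr : 0 < r) => ?_
          by_cases h : r ∈ Iic (1 : ℝ)
          · simp only [k₂, indicator_of_mem h]
            rw [← ENNReal.ofReal_mul (by positivity), mul_inv_cancel₀ (by positivity)]
            simp
          · simp [k₂, indicator_of_notMem h]
      _ = 1 := by
          rw [lintegral_indicator_one measurableSet_Iic,
            Measure.restrict_apply measurableSet_Iic, Iic_inter_Ioi]
          simp
  calc _ ≤ ∫⁻ p : E3 × E3, (4 * ENNReal.ofReal (ρ ^ 2)) * ((k₂ ‖p.1‖ * G (‖p.1‖⁻¹ • p.1)) *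
        (closedBall (0 : E3) 1).indicator 1 p.2) := by
        refine lintegral_mono fun p => ?_
        by_cases h : p ∈ {p : E3 × E3 | ‖p.1‖ ^ 2 + ‖p.2‖ ^ 2 ≤ 1}
        · have h' : ‖p.1‖ ^ 2 + ‖p.2‖ ^ 2 ≤ 1 := h
          have a1 : ‖p.1‖ ≤ 1 := by nlinarith [sq_nonneg ‖p.2‖, norm_nonneg p.1]
          have a2 : ‖p.2‖ ≤ 1 := by nlinarith [sq_nonneg ‖p.1‖, norm_nonneg p.2]
          have b2 : p.2 ∈ closedBall (0 : E3) 1 := by simpa using a2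
          have a3 : ENNReal.ofReal (‖p.2‖ ^ 2) ≤ 1 := by
            rw [ENNReal.ofReal_le_one]; nlinarith [norm_nonneg p.2]
          simp only [chi, indicator_of_mem h, k₂, indicator_of_mem (show ‖p.1‖ ∈ Iic (1 : ℝ) from a1),
            indicator_of_mem b2, Pi.one_apply, mul_one, one_mul, rotKernel, G]
          rw [ENNReal.ofReal_mul (by norm_num)]
          norm_num only [ENNReal.ofReal_ofNat]
          rw [mul_assoc (4 * ENNReal.ofReal (ρ ^ 2))]
          gcongr
          exact mul_le_of_le_one_left' a3
        · simp only [chi, indicator_of_notMem h, zero_mul, zero_le]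
    _ = 4 * ENNReal.ofReal (ρ ^ 2) * ((∫⁻ x : E3, k₂ ‖x‖ * G (‖x‖⁻¹ • x)) * V) := by
        rw [lintegral_const_mul, Measure.volume_eq_prod, lintegral_prod_mul (f := fun x : E3 => k₂ ‖x‖ * G (‖x‖⁻¹ • x)),
          lintegral_indicator_one measurableSet_closedBall]
        · fun_prop
        · exact (measurable_one.indicator measurableSet_closedBall).aemeasurable
        · have : Measurable ((closedBall (0 : E3) 1).indicator (1 : E3 → ℝ≥0∞)) :=
            measurable_one.indicator measurableSet_closedBall
          fun_prop
    _ ≤ 4 * ENNReal.ofReal (ρ ^ 2) * ((∫⁻ ω, G (ω : E3) ∂σ) * V) := by gcongr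
    _ = _ := by ring

/-- Poincaré inequality on the sphere of radius `ρ`, in double-integral form. The function `W` is a
globally measurable copy of `w`, which is only regular near the sphere, and `g` dominates
`|∇w|²`. -/
lemma sphere_poincare : ∃ K : ℝ≥0∞, K ≠ ∞ ∧ ∀ (w W : E3 → ℂ) (g : E3 → ℝ≥0∞) (ρ : ℝ), 0 < ρ →
    (∀ x, ‖x‖ = ρ → ContDiffAt ℝ 1 w x) → Measurable W → (∀ x, ‖x‖ = ρ → W x = w x) →
    Measurable g →
    (∀ x, ‖x‖ = ρ → ∀ v, ‖fderiv ℝ w x v‖ₑ ^ 2 ≤ ‖v‖ₑ ^ 2 * g x) →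
    ∫⁻ ω, (∫⁻ η, ‖W (ρ • (ω : E3)) - W (ρ • (η : E3))‖ₑ ^ 2 ∂(volume : Measure E3).toSphere)
      ∂(volume : Measure E3).toSphere ≤
    K * ENNReal.ofReal (ρ ^ 2) * ∫⁻ ω, g (ρ • (ω : E3)) ∂(volume : Measure E3).toSphere := by
  set σ := (volume : Measure E3).toSphere
  set V : ℝ≥0∞ := volume (closedBall (0 : E3) 1)
  have hV : V ≠ ∞ := measure_closedBall_lt_top.ne
  -- One factor `π / 2` comes from Cauchy–Schwarz in `θ`, the other from integrating over `θ`.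
  refine ⟨64 ^ 2 * (ENNReal.ofReal (π / 2) ^ 2 * 4 * V),
    by finiteness, fun w W g ρ hρ hw hW hWw hgm hg => ?_⟩
  set D : E3 → E3 → ℝ≥0∞ := fun x y => ‖W (ρ • x) - W (ρ • y)‖ₑ ^ 2
  have hD : Measurable fun p : E3 × E3 => D p.1 p.2 := by fun_prop
  have hnorm : ∀ z : E3, z ≠ 0 → ‖ρ • ‖z‖⁻¹ • z‖ = ρ := fun z hz => by
    rw [norm_smul, norm_smul, norm_inv, norm_norm, inv_mul_cancel₀ (norm_ne_zero_iff.2 hz),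
      mul_one, Real.norm_eq_abs, abs_of_pos hρ]
  -- The path inequality needs `x` and `y` independent, which holds almost everywhere.
  have mid : ∫⁻ x : E3, ∫⁻ y : E3, chi (x, y) * D (‖x‖⁻¹ • x) (‖y‖⁻¹ • y) ≤
      ∫⁻ x, ∫⁻ y, chi (x, y) * (ENNReal.ofReal (π / 2) *
            ∫⁻ θ in Icc 0 (π / 2), rotKernel ρ g (rot θ (x, y))) := by
    refine lintegral_mono_ae ?_
    filter_upwards [Measure.ae_ne volume (0 : E3)] with x hx
    refine lintegral_mono_ae ?_
    have hs : (volume : Measure E3) (Submodule.span ℝ {x} : Submodule ℝ E3) = 0 := by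
      refine Measure.addHaar_submodule _ _ fun h => ?_
      have h1 := finrank_span_singleton (K := ℝ) hx
      rw [h, finrank_top] at h1
      simp at h1
    filter_upwards [measure_eq_zero_iff_ae_notMem.1 hs] with y hy
    have hy0 : y ≠ 0 := fun h => hy (by simp [h])
    refine mul_le_mul_right ?_ _
    simp only [D, hWw _ (hnorm x hx), hWw _ (hnorm y hy0)]
    exact rotation_path hρ hw hg hx hy
  rw [lintegral_chi_rot (measurable_rotKernel ρ hgm)] at mid
  calc _ ≤ _ := sphere_le_chi hD
    _ ≤ 64 ^ 2 * (ENNReal.ofReal (π / 2) * ENNReal.ofReal (π / 2) *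
        (4 * ENNReal.ofReal (ρ ^ 2) * V * ∫⁻ ω, g (ρ • (ω : E3)) ∂σ)) := by
        refine mul_le_mul_right (mid.trans ?_) _
        exact mul_le_mul_right (lintegral_chi_rotKernel ρ hgm) _
    _ = _ := by ring

/-! ### Poincaré inequality on the annulus -/

lemma isCompact_annulus (R : ℝ) : IsCompact (annulus R) := by
  refine (isCompact_closedBall (0 : E3) (2 * R)).of_isClosed_subset ?_ fun x hx => by
    simpa using hx.2
  exact (isClosed_le continuous_const continuous_norm).inter
    (isClosed_le continuous_norm continuous_const)

lemma measurableSet_annulus (R : ℝ) : MeasurableSet (annulus R) :=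
  (isCompact_annulus R).measurableSet

lemma lintegral_annulus {R : ℝ} (hR : 0 < R) {F : E3 → ℝ≥0∞} (hF : Measurable F) :
    ∫⁻ x in annulus R, F x = ∫⁻ ω, (∫⁻ r in Icc R (2 * R),
      ENNReal.ofReal (r ^ 2) * F (r • (ω : E3))) ∂(volume : Measure E3).toSphere := by
  rw [← lintegral_indicator (measurableSet_annulus R),
    lintegral_polar (hF.indicator (measurableSet_annulus R))]
  refine lintegral_congr fun ω => ?_
  rw [← lintegral_indicator measurableSet_Icc, ← lintegral_indicator measurableSet_Ioi]
  refine lintegral_congr fun r => ?_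
  have hω : ‖(ω : E3)‖ = 1 := by simp
  by_cases hr : 0 < r
  · have h : r • (ω : E3) ∈ annulus R ↔ r ∈ Icc R (2 * R) := by
      show R ≤ ‖r • (ω : E3)‖ ∧ ‖r • (ω : E3)‖ ≤ 2 * R ↔ _
      rw [norm_smul, hω, mul_one, Real.norm_eq_abs, abs_of_pos hr]; rfl
    rw [indicator_of_mem (show r ∈ Ioi (0 : ℝ) from hr)]
    by_cases h' : r ∈ Icc R (2 * R)
    · rw [indicator_of_mem h', indicator_of_mem (h.2 h')]
    · rw [indicator_of_notMem h', indicator_of_notMem (mt h.1 h'), mul_zero]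
  · rw [indicator_of_notMem (show r ∉ Ioi (0 : ℝ) from hr),
      indicator_of_notMem fun h : r ∈ Icc R (2 * R) => hr (hR.trans_le h.1)]

lemma smul_sphere_mem_annulus {R r : ℝ} (hR : 0 < R) (hr : r ∈ Icc R (2 * R))
    (ω : sphere (0 : E3) 1) : r • (ω : E3) ∈ annulus R := by
  have hω : ‖(ω : E3)‖ = 1 := by simp
  show R ≤ ‖r • (ω : E3)‖ ∧ ‖r • (ω : E3)‖ ≤ 2 * R
  rw [norm_smul, hω, mul_one, Real.norm_eq_abs, abs_of_pos (hR.trans_le hr.1)]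
  exact hr

lemma radial_path {R : ℝ} (hR : 0 < R) {w : E3 → ℂ} {g : E3 → ℝ≥0∞}
    (hw : ∀ x ∈ annulus R, ContDiffAt ℝ 1 w x)
    (hg : ∀ x ∈ annulus R, ∀ v, ‖fderiv ℝ w x v‖ₑ ^ 2 ≤ ‖v‖ₑ ^ 2 * g x)
    (ω : sphere (0 : E3) 1) {r s : ℝ} (hr : r ∈ Icc R (2 * R)) (hs : s ∈ Icc R (2 * R)) :
    ‖w (r • (ω : E3)) - w (s • (ω : E3))‖ₑ ^ 2 ≤
      ENNReal.ofReal R * ∫⁻ t in Icc R (2 * R), g (t • (ω : E3)) := by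
  wlog hrs : s ≤ r generalizing r s
  · rw [← enorm_neg, neg_sub]
    exact this hs hr (le_of_not_ge hrs)
  have hsub : Icc s r ⊆ Icc R (2 * R) := Icc_subset_Icc hs.1 hr.2
  have hω : ‖(ω : E3)‖ₑ = 1 := by rw [← ofReal_norm]; simp
  refine (path_ineq (w := w) (γ := fun t => t • (ω : E3)) (γ' := fun _ => (ω : E3)) hrs
    (fun t _ => by simpa using (hasDerivAt_id t).smul_const (ω : E3)) continuousOn_const
    fun t ht => hw _ (smul_sphere_mem_annulus hR (hsub ht) ω)).trans ?_
  refine mul_le_mul' (ENNReal.ofReal_le_ofReal (by linarith [hs.1, hr.2])) ?_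
  refine (setLIntegral_mono' measurableSet_Icc fun t ht => ?_).trans (lintegral_mono_set hsub)
  simpa [hω] using hg _ (smul_sphere_mem_annulus hR (hsub ht) ω) (ω : E3)

lemma enorm_sub_sq_le (a b c : ℂ) :
    ‖a - c‖ₑ ^ 2 ≤ 2 * ‖a - b‖ₑ ^ 2 + 2 * ‖b - c‖ₑ ^ 2 := by
  rw [← ofReal_norm, ← ofReal_norm, ← ofReal_norm, ← ENNReal.ofReal_pow (norm_nonneg _),
    ← ENNReal.ofReal_pow (norm_nonneg _), ← ENNReal.ofReal_pow (norm_nonneg _),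
    ← ENNReal.ofReal_ofNat, ← ENNReal.ofReal_mul (by norm_num), ← ENNReal.ofReal_mul (by norm_num),
    ← ENNReal.ofReal_add (by positivity) (by positivity)]
  refine ENNReal.ofReal_le_ofReal ?_
  have h := norm_sub_le_norm_sub_add_norm_sub a b c
  nlinarith [norm_nonneg (a - c), sq_nonneg (‖a - b‖ - ‖b - c‖), norm_nonneg (a - b),
    norm_nonneg (b - c)]

/-- The integral over directions and radii of the bound obtained for the inner annulus integral in
`annulus_double_poincare`; the powers of `e` come from Jacobians and the length of the radial
interval. -/
lemma lintegral_affine_swap {α : Type*} [MeasurableSpace α] (σ : Measure α) [IsFiniteMeasure σ]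
    {I : Set ℝ} {e Γ : ℝ≥0∞} (hI : volume I = e) {H : α → ℝ → ℝ≥0∞}
    (hH : Measurable fun p : α × ℝ => H p.1 p.2) :
    ∫⁻ ω, (∫⁻ r in I, 4 * e ^ 2 * (4 * e ^ 2 * (e * (2 * H ω r + 2 * (e * Γ))))) ∂σ =
      32 * e ^ 5 * (∫⁻ r in I, ∫⁻ ω, H ω r ∂σ) + 32 * e ^ 5 * σ univ * (e ^ 2 * Γ) := by
  have hω : ∀ ω, Measurable (H ω) := fun ω => hH.comp measurable_prodMk_left
  have hint : Measurable fun ω => ∫⁻ r in I, H ω r := Measurable.lintegral_prod_right' hH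
  calc _ = ∫⁻ ω, (32 * e ^ 5 * (∫⁻ r in I, H ω r) + 32 * e ^ 7 * Γ) ∂σ := by
        refine lintegral_congr fun ω => ?_
        rw [← lintegral_const_mul _ (hω ω),
          show 32 * e ^ 7 * Γ = ∫⁻ _ in I, 32 * e ^ 6 * Γ by rw [setLIntegral_const, hI]; ring,
          ← lintegral_add_right _ measurable_const]
        refine lintegral_congr fun r => ?_
        ring
    _ = 32 * e ^ 5 * (∫⁻ ω, (∫⁻ r in I, H ω r) ∂σ) + 32 * e ^ 7 * Γ * σ univ := by
        rw [lintegral_add_right _ measurable_const, lintegral_const, lintegral_const_mul _ hint]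
    _ = _ := by
        rw [lintegral_lintegral_swap hH.aemeasurable]; ring

/-- Poincaré inequality on the annulus in double-integral form. The points `r ω` and `s η` are
compared through `r η`: a spherical step from `r ω` to `r η`, controlled by `sphere_poincare`, and
a radial step from `r η` to `s η`, controlled by `radial_path`. -/
lemma annulus_double_poincare : ∃ K : ℝ≥0∞, K ≠ ∞ ∧ ∀ (w W : E3 → ℂ) (g : E3 → ℝ≥0∞) (R : ℝ),
    0 < R → (∀ x ∈ annulus R, ContDiffAt ℝ 1 w x) → Measurable W →
    (∀ x ∈ annulus R, W x = w x) → Measurable g →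
    (∀ x ∈ annulus R, ∀ v, ‖fderiv ℝ w x v‖ₑ ^ 2 ≤ ‖v‖ₑ ^ 2 * g x) →
    ∫⁻ x in annulus R, ∫⁻ y in annulus R, ‖W x - W y‖ₑ ^ 2 ≤
    K * ENNReal.ofReal R ^ 5 * ∫⁻ x in annulus R, g x := by
  obtain ⟨K, hK, hP⟩ := sphere_poincare
  set σ := (volume : Measure E3).toSphere
  have hσ : σ univ ≠ ∞ := measure_ne_top _ _
  refine ⟨32 * (K + σ univ), by finiteness, fun w W g R hR hw hW hWw hgm hg => ?_⟩
  set e := ENNReal.ofReal R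
  set I := Icc R (2 * R)
  have hI : volume I = e := by simp only [I, e, Real.volume_Icc]; congr 1; ring
  set D : E3 → E3 → ℝ≥0∞ := fun x y => ‖W x - W y‖ₑ ^ 2
  have hD : Measurable fun p : E3 × E3 => D p.1 p.2 := by fun_prop
  set M := ∫⁻ x in annulus R, g x with hM
  have hr4 : ∀ r ∈ I, ENNReal.ofReal (r ^ 2) ≤ 4 * e ^ 2 := fun r hr => by
    rw [← ENNReal.ofReal_pow hR.le, ← ENNReal.ofReal_ofNat, ← ENNReal.ofReal_mul (by norm_num)]
    exact ENNReal.ofReal_le_ofReal (by nlinarith [hr.1, hr.2])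
  have her : ∀ r ∈ I, e ^ 2 ≤ ENNReal.ofReal (r ^ 2) := fun r hr => by
    rw [← ENNReal.ofReal_pow hR.le]
    exact ENNReal.ofReal_le_ofReal (by nlinarith [hr.1, hr.2])
  have hmem : ∀ r ∈ I, ∀ x : E3, ‖x‖ = r → x ∈ annulus R := fun r hr x hx => by
    show R ≤ ‖x‖ ∧ ‖x‖ ≤ 2 * R
    rw [hx]; exact hr
  have hΓm : Measurable fun η : sphere (0 : E3) 1 => ∫⁻ t in I, g (t • (η : E3)) :=
    Measurable.lintegral_prod_right' (f := fun p : sphere (0 : E3) 1 × ℝ => g (p.2 • (p.1 : E3)))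
      (by fun_prop)
  set Γ := ∫⁻ η, (∫⁻ t in I, g (t • (η : E3))) ∂σ
  have hΓ : e ^ 2 * Γ ≤ M := by
    rw [hM, lintegral_annulus hR hgm, ← lintegral_const_mul _ hΓm]
    refine lintegral_mono fun η => ?_
    rw [← lintegral_const_mul _ (by fun_prop)]
    refine setLIntegral_mono' measurableSet_Icc fun r hr => ?_
    gcongr
    exact her r hr
  have hS : ∫⁻ r in I, ∫⁻ ω, (∫⁻ η, D (r • (ω : E3)) (r • (η : E3)) ∂σ) ∂σ ≤ K * M := by
    calc _ ≤ ∫⁻ r in I, K * (ENNReal.ofReal (r ^ 2) * ∫⁻ ω, g (r • (ω : E3)) ∂σ) := by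
          refine setLIntegral_mono' measurableSet_Icc fun r hr => ?_
          rw [← mul_assoc]
          exact hP w W g r (hR.trans_le hr.1) (fun x hx => hw x (hmem r hr x hx)) hW
            (fun x hx => hWw x (hmem r hr x hx)) hgm (fun x hx => hg x (hmem r hr x hx))
      _ = K * ∫⁻ r in I, ∫⁻ ω, ENNReal.ofReal (r ^ 2) * g (r • (ω : E3)) ∂σ := by
          rw [lintegral_const_mul' _ _ hK]
          congr 1
          refine lintegral_congr fun r => ?_
          rw [lintegral_const_mul _ (by fun_prop)]
      _ = K * M := by
          rw [hM, lintegral_annulus hR hgm, lintegral_lintegral_swap]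
          exact Measurable.aemeasurable (by fun_prop)
  have hpt : ∀ r ∈ I, ∀ s ∈ I, ∀ ω η : sphere (0 : E3) 1, D (r • (ω : E3)) (s • (η : E3)) ≤
      2 * D (r • (ω : E3)) (r • (η : E3)) + 2 * (e * ∫⁻ t in I, g (t • (η : E3))) := by
    intro r hr s hs ω η
    refine (enorm_sub_sq_le _ (W (r • (η : E3))) _).trans ?_
    gcongr
    rw [hWw _ (smul_sphere_mem_annulus hR hr η), hWw _ (smul_sphere_mem_annulus hR hs η)]
    exact radial_path hR hw hg η hr hs
  have hDm : Measurable fun x => ∫⁻ y in annulus R, D x y :=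
    Measurable.lintegral_prod_right' hD
  have hD1 : Measurable fun p : sphere (0 : E3) 1 × ℝ =>
      ∫⁻ η, D (p.2 • (p.1 : E3)) (p.2 • (η : E3)) ∂σ :=
    Measurable.lintegral_prod_right' (f := fun q : (sphere (0 : E3) 1 × ℝ) × sphere (0 : E3) 1 =>
      D (q.1.2 • (q.1.1 : E3)) (q.1.2 • (q.2 : E3))) (by fun_prop)
  have inner : ∀ r ∈ I, ∀ ω : sphere (0 : E3) 1, ∫⁻ y in annulus R, D (r • (ω : E3)) y ≤
      4 * e ^ 2 * (e * (2 * ∫⁻ η, D (r • (ω : E3)) (r • (η : E3)) ∂σ + 2 * (e * Γ))) := by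
    intro r hr ω
    rw [lintegral_annulus hR (by fun_prop)]
    calc _ ≤ ∫⁻ η, (∫⁻ s in I, 4 * e ^ 2 * (2 * D (r • (ω : E3)) (r • (η : E3)) +
            2 * (e * ∫⁻ t in I, g (t • (η : E3))))) ∂σ := by
          refine lintegral_mono fun η => setLIntegral_mono' measurableSet_Icc fun s hs => ?_
          exact mul_le_mul' (hr4 s hs) (hpt r hr s hs ω η)
      _ = ∫⁻ η, 4 * e ^ 2 * e * (2 * D (r • (ω : E3)) (r • (η : E3)) +
            2 * (e * ∫⁻ t in I, g (t • (η : E3)))) ∂σ := by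
          refine lintegral_congr fun η => ?_
          rw [setLIntegral_const, hI]; ring
      _ = _ := by
          rw [lintegral_const_mul _ (by fun_prop), lintegral_add_left (by fun_prop),
            lintegral_const_mul _ (by fun_prop), lintegral_const_mul _ (by fun_prop),
            lintegral_const_mul _ (by fun_prop)]
          ring
  calc _ = ∫⁻ ω, (∫⁻ r in I, ENNReal.ofReal (r ^ 2) *
          ∫⁻ y in annulus R, D (r • (ω : E3)) y) ∂σ := lintegral_annulus hR hDm
    _ ≤ ∫⁻ ω, (∫⁻ r in I, 4 * e ^ 2 * (4 * e ^ 2 *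
          (e * (2 * ∫⁻ η, D (r • (ω : E3)) (r • (η : E3)) ∂σ + 2 * (e * Γ))))) ∂σ :=
        lintegral_mono fun ω => setLIntegral_mono' measurableSet_Icc fun r hr =>
          mul_le_mul' (hr4 r hr) (inner r hr ω)
    _ = 32 * e ^ 5 * (∫⁻ r in I, ∫⁻ ω, (∫⁻ η, D (r • (ω : E3)) (r • (η : E3)) ∂σ) ∂σ)
          + 32 * e ^ 5 * σ univ * (e ^ 2 * Γ) := lintegral_affine_swap σ hI hD1
    _ ≤ 32 * e ^ 5 * (K * M) + 32 * e ^ 5 * σ univ * M := by gcongr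
    _ = _ := by ring

/-- Poincaré inequality on the annulus: Jensen's inequality turns the double integral into the
distance to the mean, and `|A|` is at least of order `R³`. -/
lemma annulus_poincare : ∃ K : ℝ≥0∞, K ≠ ∞ ∧ ∀ (w : E3 → ℂ) (g : E3 → ℝ≥0∞) (R : ℝ), 0 < R →
    (∀ x ∈ annulus R, ContDiffAt ℝ 1 w x) → Measurable g →
    (∀ x ∈ annulus R, ∀ v, ‖fderiv ℝ w x v‖ₑ ^ 2 ≤ ‖v‖ₑ ^ 2 * g x) →
    ∫⁻ x in annulus R,
      ‖w x - ((volume (annulus R)).toReal)⁻¹ • ∫ y in annulus R, w y‖ₑ ^ 2 ≤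
    K * ENNReal.ofReal R ^ 2 * ∫⁻ x in annulus R, g x := by
  obtain ⟨K, hK, hP⟩ := annulus_double_poincare
  set σ := (volume : Measure E3).toSphere
  have hσ : σ univ ≠ ∞ := measure_ne_top _ _
  have hσ0 : σ univ ≠ 0 := by
    rw [Ne, Measure.measure_univ_eq_zero]; exact Measure.toSphere_ne_zero _
  refine ⟨(σ univ)⁻¹ * K, ENNReal.mul_ne_top (ENNReal.inv_ne_top.2 hσ0) hK,
    fun w g R hR hw hgm hg => ?_⟩
  set A := annulus R
  have hA : MeasurableSet A := measurableSet_annulus R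
  have hwc : ContinuousOn w A := fun x hx => (hw x hx).continuousAt.continuousWithinAt
  have hwi : IntegrableOn w A := hwc.integrableOn_compact (isCompact_annulus R)
  set e := ENNReal.ofReal R
  have he0 : e ≠ 0 := by simpa [e] using hR
  have heT : e ≠ ∞ := ENNReal.ofReal_ne_top
  have hAT : volume A ≠ ∞ := (isCompact_annulus R).measure_lt_top.ne
  have hvol : σ univ * e ^ 3 ≤ volume A := by
    have h1 : volume A = ∫⁻ x in annulus R, (1 : ℝ≥0∞) := by simp [A]
    rw [h1, lintegral_annulus hR measurable_const]
    calc σ univ * e ^ 3 = ∫⁻ ω : sphere (0 : E3) 1, (∫⁻ r in Icc R (2 * R), e ^ 2) ∂σ := by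
          rw [setLIntegral_const, lintegral_const, Real.volume_Icc,
            show 2 * R - R = R by ring]
          ring
      _ ≤ _ := by
          refine lintegral_mono fun ω => setLIntegral_mono' measurableSet_Icc fun r hr => ?_
          rw [mul_one, ← ENNReal.ofReal_pow hR.le]
          exact ENNReal.ofReal_le_ofReal (by nlinarith [hr.1, hr.2])
  have hA0 : volume A ≠ 0 := fun h => by
    rw [h, nonpos_iff_eq_zero] at hvol
    simp [hσ0, he0] at hvol
  -- Outside the annulus `w` is arbitrary, so the measurable copy is cut off there.
  set W := A.indicator w
  have hW : Measurable W := by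
    classical
    have := hwc.measurable_piecewise (g := (0 : E3 → ℂ)) continuousOn_const hA
    rwa [piecewise_eq_indicator] at this
  have hWw : ∀ x ∈ A, W x = w x := fun x hx => indicator_of_mem hx w
  set c := ((volume A).toReal)⁻¹ • ∫ y in A, w y with hc
  have hpt : ∀ x ∈ A, volume A * ‖w x - c‖ₑ ^ 2 ≤ ∫⁻ y in A, ‖W x - W y‖ₑ ^ 2 := by
    intro x hx
    have hv : (volume A).toReal ≠ 0 := ENNReal.toReal_ne_zero.2 ⟨hA0, hAT⟩
    have h1 : (volume A).toReal • (w x - c) = ∫ y in A, (w x - w y) := by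
      have hci : IntegrableOn (fun _ : E3 => w x) A := integrableOn_const hAT (by simp)
      rw [integral_sub hci hwi, setIntegral_const, smul_sub, hc, smul_smul,
        mul_inv_cancel₀ hv, one_smul]
      rfl
    have h2 : volume A * ‖w x - c‖ₑ ≤ ∫⁻ y in A, ‖W x - W y‖ₑ := by
      calc volume A * ‖w x - c‖ₑ = ‖(volume A).toReal • (w x - c)‖ₑ := by
            rw [enorm_smul, Real.enorm_of_nonneg ENNReal.toReal_nonneg, ENNReal.ofReal_toReal hAT]
        _ ≤ ∫⁻ y in A, ‖w x - w y‖ₑ := by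
            rw [h1]; exact enorm_integral_le_lintegral_enorm _
        _ = _ := setLIntegral_congr_fun hA fun y hy => by rw [hWw x hx, hWw y hy]
    have h3 : (volume A * ‖w x - c‖ₑ) ^ 2 ≤ volume A * ∫⁻ y in A, ‖W x - W y‖ₑ ^ 2 := by
      refine (pow_le_pow_left' h2 2).trans ((sq_lintegral_le _ (by fun_prop)).trans ?_)
      rw [Measure.restrict_apply_univ]
    rw [mul_pow, sq (volume A), mul_assoc] at h3
    exact (ENNReal.mul_le_mul_iff_right hA0 hAT).1 h3
  have h1 : σ univ * e ^ 3 * ∫⁻ x in A, ‖w x - c‖ₑ ^ 2 ≤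
      K * e ^ 5 * ∫⁻ x in A, g x := by
    calc _ ≤ volume A * ∫⁻ x in A, ‖w x - c‖ₑ ^ 2 := by gcongr
      _ = ∫⁻ x in A, volume A * ‖w x - c‖ₑ ^ 2 := (lintegral_const_mul' _ _ hAT).symm
      _ ≤ ∫⁻ x in A, ∫⁻ y in A, ‖W x - W y‖ₑ ^ 2 := setLIntegral_mono' hA hpt
      _ ≤ _ := hP w W g R hR hw hW hWw hgm hg
  have h2 : σ univ * e ^ 3 ≠ 0 := mul_ne_zero hσ0 (pow_ne_zero _ he0)
  have h3 : σ univ * e ^ 3 ≠ ∞ := ENNReal.mul_ne_top hσ (ENNReal.pow_ne_top heT)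
  refine (ENNReal.mul_le_mul_iff_right h2 h3).1 (h1.trans_eq ?_)
  calc _ = (σ univ * (σ univ)⁻¹) * (K * e ^ 5 * ∫⁻ x in A, g x) := by
        rw [ENNReal.mul_inv_cancel hσ0 hσ, one_mul]
    _ = _ := by ring

/-! ### Passage to real integrals and to `u - c / |x|` -/

lemma enorm_sq_eq_ofReal {F : Type*} [SeminormedAddCommGroup F] (z : F) :
    ‖z‖ₑ ^ 2 = ENNReal.ofReal (‖z‖ ^ 2) := by
  rw [← ofReal_norm, ENNReal.ofReal_pow (norm_nonneg _)]

lemma enorm_fderiv_sq_le (w : E3 → ℂ) (x v : E3) :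
    ‖fderiv ℝ w x v‖ₑ ^ 2 ≤ ‖v‖ₑ ^ 2 * ENNReal.ofReal (∑ j, ‖pd j w x‖ ^ 2) := by
  rw [enorm_sq_eq_ofReal, enorm_sq_eq_ofReal, ← ENNReal.ofReal_mul (by positivity)]
  refine ENNReal.ofReal_le_ofReal ?_
  have hv : v = ∑ j, v j • (EuclideanSpace.single j 1 : E3) := by
    simpa using ((EuclideanSpace.basisFun (Fin 3) ℝ).sum_repr v).symm
  have h1 : ‖fderiv ℝ w x v‖ ≤ ∑ j, ‖v j‖ * ‖pd j w x‖ := by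
    conv_lhs => rw [hv, map_sum]
    refine (norm_sum_le _ _).trans (Finset.sum_le_sum fun j _ => ?_)
    rw [map_smul, norm_smul]; rfl
  calc _ ≤ (∑ j, ‖v j‖ * ‖pd j w x‖) ^ 2 := by gcongr
    _ ≤ _ := by
      rw [EuclideanSpace.norm_sq_eq]
      exact Finset.sum_mul_sq_le_sq_mul_sq _ _ _

lemma ContDiffAt.continuousAt_pd {w : E3 → ℂ} {x : E3} (hw : ContDiffAt ℝ 1 w x) (j : Fin 3) :
    ContinuousAt (pd j w) x :=
  (hw.continuousAt_fderiv (by simp)).clm_apply continuousAt_const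

lemma annulus_poincare_real : ∃ k : ℝ, 0 ≤ k ∧ ∀ (w : E3 → ℂ) (R : ℝ), 0 < R →
    (∀ x ∈ annulus R, ContDiffAt ℝ 1 w x) →
    ∫ x in annulus R,
      ‖w x - ((volume (annulus R)).toReal)⁻¹ • ∫ y in annulus R, w y‖ ^ 2 ≤
    k * R ^ 2 * ∫ x in annulus R, ∑ j, ‖pd j w x‖ ^ 2 := by
  obtain ⟨K, hK, hP⟩ := annulus_poincare
  refine ⟨K.toReal, ENNReal.toReal_nonneg, fun w R hR hw => ?_⟩
  set c := ((volume (annulus R)).toReal)⁻¹ • ∫ y in annulus R, w y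
  have hA := measurableSet_annulus R
  have hwc : ContinuousOn w (annulus R) := fun x hx =>
    (hw x hx).continuousAt.continuousWithinAt
  have hpc : ∀ j, ContinuousOn (pd j w) (annulus R) := fun j x hx =>
    ((hw x hx).continuousAt_pd j).continuousWithinAt
  have hGc : ContinuousOn (fun x => ∑ j, ‖pd j w x‖ ^ 2) (annulus R) := by fun_prop
  have hPc : ContinuousOn (fun x => ‖w x - c‖ ^ 2) (annulus R) := by fun_prop
  have hgm : Measurable ((annulus R).indicator
      fun x => ENNReal.ofReal (∑ j, ‖pd j w x‖ ^ 2)) := by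
    classical
    have := (ENNReal.continuous_ofReal.comp_continuousOn hGc).measurable_piecewise
      (g := (0 : E3 → ℝ≥0∞)) continuousOn_const hA
    rwa [piecewise_eq_indicator] at this
  have h := hP w _ R hR hw hgm fun x hx v => by
    rw [indicator_of_mem hx]; exact enorm_fderiv_sq_le w x v
  have hG0 : 0 ≤ ∫ x in annulus R, ∑ j, ‖pd j w x‖ ^ 2 := integral_nonneg fun x => by positivity
  rw [setLIntegral_congr_fun hA fun x hx => indicator_of_mem hx _] at h
  simp_rw [enorm_sq_eq_ofReal] at h
  rw [← ofReal_integral_eq_lintegral_ofReal (hPc.integrableOn_compact (isCompact_annulus R))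
      (ae_of_all _ fun x => by positivity),
    ← ofReal_integral_eq_lintegral_ofReal (hGc.integrableOn_compact (isCompact_annulus R))
      (ae_of_all _ fun x => by positivity), ← ENNReal.ofReal_toReal hK,
    ← ENNReal.ofReal_pow hR.le, ← ENNReal.ofReal_mul ENNReal.toReal_nonneg,
    ← ENNReal.ofReal_mul (by positivity)] at h
  exact (ENNReal.ofReal_le_ofReal_iff (by positivity)).1 h

/-- With `w = |x| u`, the remainder is `u - c / |x| = |x|⁻¹ (w - c)`; the product rule and
`|∇ |x|⁻¹| ≤ |x|⁻²` give the bound. -/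
lemma norm_pd_remainder_sq_le {u : E3 → ℂ} {x : E3} (hx : x ≠ 0) (c : ℂ) (j : Fin 3)
    (hw : DifferentiableAt ℝ (fun y => ((‖y‖ : ℝ) : ℂ) * u y) x) :
    ‖pd j (fun y => u y - c * ((‖y‖⁻¹ : ℝ) : ℂ)) x‖ ^ 2 ≤
      2 * ((‖x‖⁻¹) ^ 2 * ‖pd j (fun y => ((‖y‖ : ℝ) : ℂ) * u y) x‖ ^ 2) +
        2 * ((‖x‖⁻¹) ^ 4 * ‖((‖x‖ : ℝ) : ℂ) * u x - c‖ ^ 2) := by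
  set w : E3 → ℂ := fun y => ((‖y‖ : ℝ) : ℂ) * u y with hwdef
  have hx' : ‖x‖ ≠ 0 := norm_ne_zero_iff.2 hx
  have hn : DifferentiableAt ℝ (fun y : E3 => ‖y‖) x :=
    (contDiffAt_norm ℝ hx (n := 1)).differentiableAt (by simp)
  have hinv := (hasDerivAt_inv hx').comp_hasFDerivAt x hn.hasFDerivAt
  have hprod := hinv.smul (hw.hasFDerivAt.sub_const c)
  have heq : (fun y => u y - c * ((‖y‖⁻¹ : ℝ) : ℂ)) =ᶠ[nhds x]
      fun y => (Inv.inv ∘ fun y : E3 => ‖y‖) y • (w y - c) := by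
    filter_upwards [isOpen_ne.mem_nhds hx] with y hy
    have hy' : ((‖y‖ : ℝ) : ℂ) ≠ 0 := by exact_mod_cast norm_ne_zero_iff.2 hy
    simp only [hwdef, Function.comp, Complex.real_smul, Complex.ofReal_inv]
    field_simp
  have hpd := congrArg (fun L : E3 →L[ℝ] ℂ => L (EuclideanSpace.single j 1))
    (hprod.congr_of_eventuallyEq heq).fderiv
  have hN : ‖fderiv ℝ (fun y : E3 => ‖y‖) x (EuclideanSpace.single j 1)‖ ≤ 1 := by
    refine (ContinuousLinearMap.le_opNorm _ _).trans ?_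
    simpa using norm_fderiv_le_of_lipschitz ℝ (lipschitzWith_one_norm (E := E3)) (x₀ := x)
  set N := fderiv ℝ (fun y : E3 => ‖y‖) x (EuclideanSpace.single j 1)
  have hpd' : pd j (fun y => u y - c * ((‖y‖⁻¹ : ℝ) : ℂ)) x =
      ‖x‖⁻¹ • pd j w x + (-(‖x‖ ^ 2)⁻¹ * N) • (w x - c) := by
    simpa [pd] using hpd
  have h1 : ‖pd j (fun y => u y - c * ((‖y‖⁻¹ : ℝ) : ℂ)) x‖ ≤
      ‖x‖⁻¹ * ‖pd j w x‖ + (‖x‖⁻¹) ^ 2 * ‖w x - c‖ := by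
    rw [hpd']
    refine (norm_add_le _ _).trans ?_
    rw [norm_smul, norm_smul, norm_mul, norm_neg, norm_inv, norm_inv, norm_pow, norm_norm, inv_pow]
    gcongr
    exact mul_le_of_le_one_right (by positivity) hN
  calc _ ≤ (‖x‖⁻¹ * ‖pd j w x‖ + (‖x‖⁻¹) ^ 2 * ‖w x - c‖) ^ 2 := by gcongr
    _ ≤ 2 * ((‖x‖⁻¹ * ‖pd j w x‖) ^ 2 + ((‖x‖⁻¹) ^ 2 * ‖w x - c‖) ^ 2) := add_sq_le
    _ = _ := by ring

end

/-- **Gluing (Poincaré-type) inequality on a dyadic annulus:**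
a function is approximated, together with its gradient, by the multiple `c|x|⁻¹` of the
fundamental solution determined by the average `c` of `|y|u(y)` over the annulus, with
error controlled by `|x|⁻¹ ∇(|x|u)`. -/
theorem annulus_fundamental_solution_gluing :
    ∃ C : ℝ, 0 < C ∧
      ∀ (R : ℝ), 0 < R →
      ∀ u : E3 → ℂ,
        (∃ U : Set E3, IsOpen U ∧ annulus R ⊆ U ∧ ContDiffOn ℝ (⊤ : ℕ∞) u U) →
        let c : ℂ := ((volume (annulus R)).toReal)⁻¹ •
          ∫ y in annulus R, ((‖y‖ : ℝ) : ℂ) * u y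
        Real.sqrt (∫ x in annulus R,
            ∑ j, ‖pd j (fun y => u y - c * ((‖y‖⁻¹ : ℝ) : ℂ)) x‖ ^ 2) +
          R⁻¹ * Real.sqrt (∫ x in annulus R, ‖u x - c * ((‖x‖⁻¹ : ℝ) : ℂ)‖ ^ 2) ≤
        C * Real.sqrt (∫ x in annulus R,
            ∑ j, (‖x‖⁻¹) ^ 2 * ‖pd j (fun y => ((‖y‖ : ℝ) : ℂ) * u y) x‖ ^ 2) := by
  obtain ⟨k, hk, hP⟩ := annulus_poincare_real
  refine ⟨Real.sqrt (2 + 24 * k) + Real.sqrt (4 * k), by positivity, ?_⟩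
  rintro R hR u ⟨U, hU, hAU, hu⟩ c
  set w : E3 → ℂ := fun y => ((‖y‖ : ℝ) : ℂ) * u y with hwdef
  have hpos : ∀ x ∈ annulus R, 0 < ‖x‖ := fun x hx => hR.trans_le hx.1
  have hw : ∀ x ∈ annulus R, ContDiffAt ℝ 1 w x := fun x hx => by
    have h1 : ContDiffAt ℝ 1 (fun y : E3 => ((‖y‖ : ℝ) : ℂ)) x :=
      Complex.ofRealCLM.contDiff.contDiffAt.comp x
        (contDiffAt_norm ℝ (norm_pos_iff.1 (hpos x hx)))
    exact h1.mul (((hu.contDiffAt (hU.mem_nhds (hAU hx))).of_le (by exact_mod_cast le_top)))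
  have hA := measurableSet_annulus R
  have hcpt := isCompact_annulus R
  have hwc : ContinuousOn w (annulus R) := fun x hx =>
    (hw x hx).continuousAt.continuousWithinAt
  have hpc : ∀ j, ContinuousOn (pd j w) (annulus R) := fun j x hx =>
    ((hw x hx).continuousAt_pd j).continuousWithinAt
  have hnc : ContinuousOn (fun x : E3 => ‖x‖⁻¹) (annulus R) :=
    continuous_norm.continuousOn.inv₀ fun x hx => (hpos x hx).ne'
  have hPi : IntegrableOn (fun x => ‖w x - c‖ ^ 2) (annulus R) :=
    ContinuousOn.integrableOn_compact hcpt (by fun_prop)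
  have hQi : IntegrableOn (fun x => ∑ j, (‖x‖⁻¹) ^ 2 * ‖pd j w x‖ ^ 2) (annulus R) :=
    ContinuousOn.integrableOn_compact hcpt (by fun_prop)
  have hinv : ∀ x ∈ annulus R, ‖x‖⁻¹ ≤ R⁻¹ := fun x hx => inv_anti₀ hR hx.1
  set Q := ∫ x in annulus R, ∑ j, (‖x‖⁻¹) ^ 2 * ‖pd j w x‖ ^ 2
  set P := ∫ x in annulus R, ‖w x - c‖ ^ 2
  -- Poincaré for `w` together with `|x| ≤ 2 R`, which restores the weight `|x|⁻²`.
  have hPQ : P ≤ 4 * k * R ^ 4 * Q := by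
    calc P ≤ k * R ^ 2 * ∫ x in annulus R, ∑ j, ‖pd j w x‖ ^ 2 := hP w R hR hw
      _ ≤ k * R ^ 2 * ∫ x in annulus R, 4 * R ^ 2 * ∑ j, (‖x‖⁻¹) ^ 2 * ‖pd j w x‖ ^ 2 := by
          refine mul_le_mul_of_nonneg_left ?_ (by positivity)
          refine integral_mono_of_nonneg (ae_of_all _ fun x => by positivity)
            (hQi.const_mul _) ?_
          filter_upwards [ae_restrict_mem hA] with x hx
          rw [← Finset.mul_sum, ← mul_assoc]
          refine le_mul_of_one_le_left (by positivity) ?_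
          have h0 := hpos x hx
          rw [inv_pow, ← div_eq_mul_inv, one_le_div (by positivity)]
          nlinarith [hx.2]
      _ = _ := by rw [integral_const_mul]; ring
  have hgrad : ∫ x in annulus R, ∑ j, ‖pd j (fun y => u y - c * ((‖y‖⁻¹ : ℝ) : ℂ)) x‖ ^ 2 ≤
      (2 + 24 * k) * Q := by
    calc _ ≤ ∫ x in annulus R, (2 * (∑ j, (‖x‖⁻¹) ^ 2 * ‖pd j w x‖ ^ 2) +
          6 * (R⁻¹) ^ 4 * ‖w x - c‖ ^ 2) := by
          refine integral_mono_of_nonneg (ae_of_all _ fun x => by positivity)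
            ((hQi.const_mul _).add (hPi.const_mul _)) ?_
          filter_upwards [ae_restrict_mem hA] with x hx
          have hb : (‖x‖⁻¹) ^ 4 ≤ (R⁻¹) ^ 4 := by gcongr; exact hx.1
          calc _ ≤ ∑ j, (2 * ((‖x‖⁻¹) ^ 2 * ‖pd j w x‖ ^ 2) +
                2 * ((‖x‖⁻¹) ^ 4 * ‖w x - c‖ ^ 2)) :=
                Finset.sum_le_sum fun j _ => norm_pd_remainder_sq_le
                  (norm_pos_iff.1 (hpos x hx)) c j ((hw x hx).differentiableAt (by simp))
            _ = 2 * (∑ j, (‖x‖⁻¹) ^ 2 * ‖pd j w x‖ ^ 2) +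
                6 * (‖x‖⁻¹) ^ 4 * ‖w x - c‖ ^ 2 := by
                simp only [Fin.sum_univ_three]; ring
            _ ≤ _ := by gcongr
      _ = 2 * Q + 6 * (R⁻¹) ^ 4 * P := by
          rw [integral_add (hQi.const_mul _) (hPi.const_mul _), integral_const_mul,
            integral_const_mul]
      _ ≤ 2 * Q + 6 * (R⁻¹) ^ 4 * (4 * k * R ^ 4 * Q) := by gcongr
      _ = _ := by field_simp; ring
  have hfun : ∫ x in annulus R, ‖u x - c * ((‖x‖⁻¹ : ℝ) : ℂ)‖ ^ 2 ≤ R ^ 2 * (4 * k * Q) := by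
    calc _ ≤ ∫ x in annulus R, (R⁻¹) ^ 2 * ‖w x - c‖ ^ 2 := by
          refine integral_mono_of_nonneg (ae_of_all _ fun x => by positivity)
            (hPi.const_mul _) ?_
          filter_upwards [ae_restrict_mem hA] with x hx
          have h0 := hpos x hx
          have hx' : ((‖x‖ : ℝ) : ℂ) ≠ 0 := by exact_mod_cast h0.ne'
          have e : u x - c * ((‖x‖⁻¹ : ℝ) : ℂ) = ‖x‖⁻¹ • (w x - c) := by
            simp only [hwdef, Complex.real_smul, Complex.ofReal_inv]
            field_simp
          rw [e, norm_smul, mul_pow, norm_inv, norm_norm]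
          have := hinv x hx
          gcongr
      _ = (R⁻¹) ^ 2 * P := integral_const_mul _ _
      _ ≤ (R⁻¹) ^ 2 * (4 * k * R ^ 4 * Q) := by gcongr
      _ = _ := by field_simp
  calc _ ≤ Real.sqrt ((2 + 24 * k) * Q) + R⁻¹ * Real.sqrt (R ^ 2 * (4 * k * Q)) := by gcongr
    _ = _ := by
        rw [Real.sqrt_mul (by positivity), Real.sqrt_mul (by positivity), Real.sqrt_sq hR.le,
          ← mul_assoc, inv_mul_cancel₀ hR.ne', one_mul, Real.sqrt_mul (by positivity)]
        ring
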